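/- Assume m ≥ 2, a > 0, b ∈ ℝ, c = 2/a − 1, and define K(x,y) = (‖x‖ ‖y‖)^{−ab/2} exp( −(2i/a) ⟨x,y⟩ (‖x‖ ‖y‖)^{a/2−1} ), h(x) = ‖x‖^{ a b − (1 − a/2) m }, and for t ∈ ℕ the radial polynomial p_t(r) = Σ_{i=0}^t 2^{2t}(2/a)^{2t} binom(t,i) (Γ(m/2 + t)/Γ(m/2 + i)) (a/2)^{t−i} (−1)^i r^{a i}. Then for every t ∈ ℕ and every y ≠ 0: (2π)^{−m/2} (2/a)^{m/2−1} ∫_{ℝᵐ} K(x,y) p_t(‖x‖) ‖x‖^{−ab/2} e^{−‖x‖^a / a} h(x) dx = (−1)^t p_t(‖y‖) ‖y‖^{−ab/2} e^{−‖y‖^a / a}. (The radial generalized Laguerre functions of degree ℓ = 0 are eigenfunctions of the deformed Fourier transform F_D with eigenvalues (−i)^{2t} = (−1)^t, for k = 0 and c = 2/a − 1.) -/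

import Mathlib

open Real

/-- `j`-th partial derivative of a complex-valued function on Euclidean space. -/
noncomputable def pdC {m : ℕ} (j : Fin m) (f : EuclideanSpace ℝ (Fin m) → ℂ)
    (x : EuclideanSpace ℝ (Fin m)) : ℂ :=
  fderiv ℝ f x (EuclideanSpace.single j 1)

/-- The kernel
`K(x,y) = (‖x‖‖y‖)^{-ab/2} exp(-(2i/a) ⟨x,y⟩ (‖x‖‖y‖)^{a/2-1})` of the deformed
Fourier transform (case `c = 2/a - 1`, `k = 0`). -/
noncomputable def Kker (m : ℕ) (a b : ℝ) (x y : EuclideanSpace ℝ (Fin m)) : ℂ :=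
  (((‖x‖ * ‖y‖) ^ (-(a * b) / 2) : ℝ) : ℂ)
    * Complex.exp (-(2 * Complex.I / (a : ℂ)) * ((∑ j, x j * y j : ℝ) : ℂ)
        * (((‖x‖ * ‖y‖) ^ (a / 2 - 1) : ℝ) : ℂ))

open MeasureTheory

/-- The radial polynomial
`p_t(r) = Σ_{i=0}^t 2^{2t}(2/a)^{2t} C(t,i) (Γ(m/2+t)/Γ(m/2+i)) (a/2)^{t-i} (-1)^i r^{a i}`. -/
noncomputable def lagP16 (m : ℕ) (a : ℝ) (t : ℕ) (r : ℝ) : ℝ :=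
  ∑ i ∈ Finset.range (t + 1),
    2 ^ (2 * t) * (2 / a) ^ (2 * t) * (t.choose i : ℝ)
      * (Real.Gamma ((m : ℝ) / 2 + t) / Real.Gamma ((m : ℝ) / 2 + i))
      * (a / 2) ^ (t - i) * (-1 : ℝ) ^ i * r ^ (a * i)


theorem aux_fderiv {m : ℕ} (p : ℝ) (x : EuclideanSpace ℝ (Fin m)) (hx : x ≠ 0) :
    HasFDerivAt (fun x : EuclideanSpace ℝ (Fin m) => ‖x‖ ^ (p - 1) • x)
      (‖x‖ ^ (p - 1) • (ContinuousLinearMap.id ℝ (EuclideanSpace ℝ (Fin m))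
        + (((p - 1) * (‖x‖ ^ 2)⁻¹) • innerSL ℝ x).smulRight x)) x := by
  have hn : 0 < ‖x‖ := norm_pos_iff.mpr hx
  have h1 := (hasStrictFDerivAt_norm_sq x).hasFDerivAt
  have h2 := h1.rpow_const (p := (p - 1) / 2) (Or.inl (by positivity))
  have e : (fun x : EuclideanSpace ℝ (Fin m) => (‖x‖ ^ 2) ^ ((p - 1) / 2))
      = fun x => ‖x‖ ^ (p - 1) := by
    funext z
    rw [← Real.rpow_natCast, ← Real.rpow_mul (norm_nonneg _)]
    congr 1; push_cast; ring
  rw [e] at h2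
  have h3 := h2.smul (hasFDerivAt_id x)
  refine h3.congr_fderiv ?_
  ext1 v
  have e2 : (‖x‖ ^ 2) ^ ((p - 1) / 2 - 1) = ‖x‖ ^ (p - 1) * (‖x‖ ^ 2)⁻¹ := by
    rw [Real.rpow_sub (by positivity), Real.rpow_one]
    have h5 : (‖x‖ ^ 2) ^ ((p - 1) / 2) = ‖x‖ ^ (p - 1) := congrFun e x
    rw [h5]; rfl
  simp only [e2, _root_.add_apply, _root_.smul_apply,
    ContinuousLinearMap.smulRight_apply, id, ContinuousLinearMap.id_apply, innerSL_apply_apply,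
    smul_eq_mul, smul_add, smul_smul]
  congr 2
  simp only [nsmul_eq_mul]
  push_cast
  ring

theorem aux_det {m : ℕ} (p : ℝ) (x : EuclideanSpace ℝ (Fin m)) (hx : x ≠ 0) :
    (‖x‖ ^ (p - 1) • (ContinuousLinearMap.id ℝ (EuclideanSpace ℝ (Fin m))
        + (((p - 1) * (‖x‖ ^ 2)⁻¹) • innerSL ℝ x).smulRight x)).det
      = p * ‖x‖ ^ ((p - 1) * m) := by
  have hn : 0 < ‖x‖ := norm_pos_iff.mpr hx
  have : ((‖x‖ ^ (p - 1) • (ContinuousLinearMap.id ℝ (EuclideanSpace ℝ (Fin m))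
        + (((p - 1) * (‖x‖ ^ 2)⁻¹) • innerSL ℝ x).smulRight x) :
          EuclideanSpace ℝ (Fin m) →L[ℝ] EuclideanSpace ℝ (Fin m)) :
          EuclideanSpace ℝ (Fin m) →ₗ[ℝ] EuclideanSpace ℝ (Fin m))
      = ‖x‖ ^ (p - 1) • LinearMap.transvection
        ((((p - 1) * (‖x‖ ^ 2)⁻¹) • innerSL ℝ x : EuclideanSpace ℝ (Fin m) →L[ℝ] ℝ) :
          EuclideanSpace ℝ (Fin m) →ₗ[ℝ] ℝ) x := by
    ext1 v
    simp [LinearMap.transvection.apply]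
  rw [ContinuousLinearMap.det, this, LinearMap.det_smul, LinearMap.transvection.det]
  simp only [finrank_euclideanSpace, Fintype.card_fin, ContinuousLinearMap.coe_coe,
    _root_.smul_apply, innerSL_apply_apply, real_inner_self_eq_norm_sq, smul_eq_mul]
  rw [Real.rpow_mul hn.le, Real.rpow_natCast]
  field_simp
  ring

theorem radial_cov {m : ℕ} (hm : 2 ≤ m) (p : ℝ) (hp : 0 < p)
    (G : EuclideanSpace ℝ (Fin m) → ℂ) :
    ∫ x : EuclideanSpace ℝ (Fin m),
      ((p * ‖x‖ ^ ((p - 1) * m) : ℝ) : ℂ) * G (‖x‖ ^ (p - 1) • x) = ∫ u, G u := by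
  have : Nontrivial (EuclideanSpace ℝ (Fin m)) := by
    have : Nonempty (Fin m) := ⟨⟨0, by omega⟩⟩
    infer_instance
  have key : ∀ q : ℝ, 0 < q → ∀ x : EuclideanSpace ℝ (Fin m), x ≠ 0 →
      ‖‖x‖ ^ (q - 1) • x‖ = ‖x‖ ^ q := by
    intro q hq x hx
    have hn : 0 < ‖x‖ := norm_pos_iff.mpr hx
    rw [norm_smul, Real.norm_of_nonneg (by positivity), Real.rpow_sub hn, Real.rpow_one]
    field_simp
  have inv : ∀ q : ℝ, 0 < q → ∀ x : EuclideanSpace ℝ (Fin m), x ≠ 0 →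
      ‖‖x‖ ^ (q - 1) • x‖ ^ (q⁻¹ - 1) • (‖x‖ ^ (q - 1) • x) = x := by
    intro q hq x hx
    have hn : 0 < ‖x‖ := norm_pos_iff.mpr hx
    rw [key q hq x hx, smul_smul, ← Real.rpow_mul hn.le, ← Real.rpow_add hn]
    have : q * (q⁻¹ - 1) + (q - 1) = 0 := by field_simp; ring
    rw [this, Real.rpow_zero, one_smul]
  have nz : ∀ q : ℝ, ∀ x : EuclideanSpace ℝ (Fin m), x ≠ 0 → ‖x‖ ^ (q - 1) • x ≠ 0 := by
    intro q x hx
    have hn : 0 < ‖x‖ := norm_pos_iff.mpr hx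
    exact smul_ne_zero (by positivity) hx
  have him : (fun x : EuclideanSpace ℝ (Fin m) => ‖x‖ ^ (p - 1) • x) '' {0}ᶜ = {0}ᶜ := by
    ext u
    constructor
    · rintro ⟨x, hx, rfl⟩
      exact nz p x hx
    · intro hu
      refine ⟨‖u‖ ^ (p⁻¹ - 1) • u, nz _ u hu, ?_⟩
      have := inv p⁻¹ (inv_pos.mpr hp) u hu
      rwa [inv_inv] at this
  have hinj : Set.InjOn (fun x : EuclideanSpace ℝ (Fin m) => ‖x‖ ^ (p - 1) • x) {0}ᶜ := by
    intro x hx z hz h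
    simp only at h
    rw [← inv p hp x hx, ← inv p hp z hz, h]
  have h := integral_image_eq_integral_abs_det_fderiv_smul volume
    (s := ({0}ᶜ : Set (EuclideanSpace ℝ (Fin m)))) (measurableSet_singleton 0).compl
    (fun x hx => (aux_fderiv p x hx).hasFDerivWithinAt) hinj G
  rw [him] at h
  have hr : (volume : Measure (EuclideanSpace ℝ (Fin m))).restrict {0}ᶜ = volume :=
    Measure.restrict_eq_self_of_ae_mem (by simp [ae_iff])
  rw [hr] at h
  rw [h]
  refine integral_congr_ae ?_
  have h0 : ∀ᵐ x : EuclideanSpace ℝ (Fin m), x ≠ 0 := by simp [ae_iff]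
  filter_upwards [h0] with x hx
  have hn : 0 < ‖x‖ := norm_pos_iff.mpr hx
  rw [aux_det p x hx, abs_of_nonneg (by positivity), Complex.real_smul]

theorem gauss_integrable {m : ℕ} (j : ℕ) (s : ℝ) (hs : 0 < s) :
    Integrable (fun u : EuclideanSpace ℝ (Fin m) => ‖u‖ ^ (2 * j) * rexp (-s * ‖u‖ ^ 2)) := by
  have h := (GaussianFourier.integrable_cexp_neg_mul_sq_norm_add (V := EuclideanSpace ℝ (Fin m))
    (b := ((s / 2 : ℝ) : ℂ)) (by simpa using hs) 0 0).norm
  refine (h.const_mul ((2 / s) ^ j * j.factorial)).mono'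
    (Continuous.aestronglyMeasurable (by fun_prop)) (Filter.Eventually.of_forall fun u => ?_)
  have h1 := Real.pow_div_factorial_le_exp (s / 2 * ‖u‖ ^ 2) (by positivity) j
  rw [div_le_iff₀ (by positivity)] at h1
  rw [Real.norm_of_nonneg (by positivity), Complex.norm_exp]
  have e1 : (-((s / 2 : ℝ) : ℂ) * (‖u‖ : ℂ) ^ 2 + 0 * ((inner ℝ (0 : EuclideanSpace ℝ (Fin m)) u : ℝ) : ℂ)).re
      = -(s / 2 * ‖u‖ ^ 2) := by
    rw [zero_mul, add_zero, ← Complex.ofReal_pow, ← Complex.ofReal_neg, ← Complex.ofReal_mul,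
      Complex.ofReal_re]; ring
  rw [e1]
  have e2 : rexp (-s * ‖u‖ ^ 2) = rexp (-(s / 2 * ‖u‖ ^ 2)) * rexp (-(s / 2 * ‖u‖ ^ 2)) := by
    rw [← Real.exp_add]; ring_nf
  have e3 : ‖u‖ ^ (2 * j) = (2 / s) ^ j * (s / 2 * ‖u‖ ^ 2) ^ j := by
    rw [← mul_pow, pow_mul]; congr 1; field_simp
  rw [e2, e3]
  have e4 : rexp (s / 2 * ‖u‖ ^ 2) * rexp (-(s / 2 * ‖u‖ ^ 2)) = 1 := by
    rw [← Real.exp_add]; simp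
  set E := rexp (-(s / 2 * ‖u‖ ^ 2))
  calc (2 / s) ^ j * (s / 2 * ‖u‖ ^ 2) ^ j * (E * E)
      ≤ (2 / s) ^ j * (rexp (s / 2 * ‖u‖ ^ 2) * j.factorial) * (E * E) := by gcongr
    _ = (2 / s) ^ j * j.factorial * E * (rexp (s / 2 * ‖u‖ ^ 2) * E) := by ring
    _ = _ := by rw [e4, mul_one]

theorem gauss_norm {m : ℕ} (j : ℕ) (s d : ℝ) (w u : EuclideanSpace ℝ (Fin m)) :
    ‖(‖u‖ : ℂ) ^ (2 * j) * Complex.exp (-(s : ℂ) * (‖u‖ : ℂ) ^ 2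
        + (Complex.I * d) * ((inner ℝ w u : ℝ) : ℂ))‖ = ‖u‖ ^ (2 * j) * rexp (-s * ‖u‖ ^ 2) := by
  rw [norm_mul, norm_pow, Complex.norm_real, norm_norm, Complex.norm_exp]
  congr 2
  rw [Complex.add_re, ← Complex.ofReal_pow, ← Complex.ofReal_neg, ← Complex.ofReal_mul,
      Complex.ofReal_re, mul_assoc, ← Complex.ofReal_mul, Complex.I_mul_re]
  simp

theorem gauss_int {m : ℕ} (j : ℕ) (s : ℝ) (hs : 0 < s) (d : ℝ) (w : EuclideanSpace ℝ (Fin m)) :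
    Integrable (fun u : EuclideanSpace ℝ (Fin m) =>
      (‖u‖ : ℂ) ^ (2 * j) * Complex.exp (-(s : ℂ) * (‖u‖ : ℂ) ^ 2
        + (Complex.I * d) * ((inner ℝ w u : ℝ) : ℂ))) := by
  refine (gauss_integrable (m := m) j s hs).mono'
    (Continuous.aestronglyMeasurable (by fun_prop)) (Filter.Eventually.of_forall fun u => ?_)
  rw [gauss_norm]

theorem gauss_deriv {m : ℕ} (j : ℕ) (s : ℝ) (hs : 0 < s) (d : ℝ) (w : EuclideanSpace ℝ (Fin m)) :
    HasDerivAt (fun s : ℝ => ∫ u : EuclideanSpace ℝ (Fin m),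
      (‖u‖ : ℂ) ^ (2 * j) * Complex.exp (-(s : ℂ) * (‖u‖ : ℂ) ^ 2
        + (Complex.I * d) * ((inner ℝ w u : ℝ) : ℂ)))
      (-∫ u : EuclideanSpace ℝ (Fin m),
      (‖u‖ : ℂ) ^ (2 * (j + 1)) * Complex.exp (-(s : ℂ) * (‖u‖ : ℂ) ^ 2
        + (Complex.I * d) * ((inner ℝ w u : ℝ) : ℂ))) s := by
  rw [← integral_neg]
  refine (hasDerivAt_integral_of_dominated_loc_of_deriv_le (s := Set.Ioi (s / 2))
    (bound := fun u => ‖u‖ ^ (2 * (j + 1)) * rexp (-(s / 2) * ‖u‖ ^ 2))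
    (F' := fun (s : ℝ) (u : EuclideanSpace ℝ (Fin m)) =>
      -((‖u‖ : ℂ) ^ (2 * (j + 1)) * Complex.exp (-(s : ℂ) * (‖u‖ : ℂ) ^ 2
        + (Complex.I * d) * ((inner ℝ w u : ℝ) : ℂ))))
    (Ioi_mem_nhds (by linarith)) ?_ (gauss_int j s hs d w) ?_ ?_
    (gauss_integrable (j + 1) (s / 2) (by positivity)) ?_).2
  · exact Filter.Eventually.of_forall fun z => Continuous.aestronglyMeasurable (by fun_prop)
  · exact Continuous.aestronglyMeasurable (by fun_prop)
  · refine Filter.Eventually.of_forall fun u z hz => ?_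
    rw [norm_neg, gauss_norm]
    have : s / 2 ≤ z := le_of_lt hz
    gcongr
  · refine Filter.Eventually.of_forall fun u z hz => ?_
    have h1 : HasDerivAt (fun z : ℝ => -(z : ℂ) * (‖u‖ : ℂ) ^ 2
        + (Complex.I * d) * ((inner ℝ w u : ℝ) : ℂ)) (-1 * (‖u‖ : ℂ) ^ 2) z :=
      (((HasDerivAt.ofReal_comp (hasDerivAt_id z)).neg).mul_const _).add_const _ |>.congr_deriv
        (by simp)
    exact ((h1.cexp).const_mul ((‖u‖ : ℂ) ^ (2 * j))).congr_deriv (by ring)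

/-- closed form of the Gaussian moments -/
noncomputable def gForm (μ κ : ℝ) (j : ℕ) (s : ℝ) : ℝ :=
  ∑ k ∈ Finset.range (j + 1), (j.choose k : ℝ) * (Gamma (μ + j) / Gamma (μ + k)) * (-κ) ^ k
    * (s ^ (-(μ + j + k)) * rexp (-κ / s))

theorem gCoeff (μ : ℝ) (hμ : 0 < μ) (j k : ℕ) :
    (μ + j + k + 1) * ((j.choose (k + 1) : ℝ) * (Gamma (μ + j) / Gamma (μ + k + 1)))
      + (j.choose k : ℝ) * (Gamma (μ + j) / Gamma (μ + k))
    = ((j + 1).choose (k + 1) : ℝ) * (Gamma (μ + j + 1) / Gamma (μ + k + 1)) := by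
  rw [Real.Gamma_add_one (by positivity), Real.Gamma_add_one (by positivity)]
  have h1 : 0 < Gamma (μ + k) := Real.Gamma_pos_of_pos (by positivity)
  have h2 : 0 < μ + k := by positivity
  rw [Nat.choose_succ_succ]
  have h3 : (j.choose (k + 1) : ℝ) * (k + 1) = j.choose k * (j - k) := by
    rcases le_or_gt k j with h | h
    · have := Nat.choose_succ_right_eq j k
      rw [← Nat.cast_sub h]; exact_mod_cast this
    · rw [Nat.choose_eq_zero_of_lt h, Nat.choose_eq_zero_of_lt (by omega)]; simp
  push_cast
  field_simp
  linear_combination h3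

theorem gForm_deriv (μ κ : ℝ) (hμ : 0 < μ) (j : ℕ) (s : ℝ) (hs : 0 < s) :
    HasDerivAt (gForm μ κ j) (-gForm μ κ (j + 1) s) s := by
  have hE : HasDerivAt (fun s : ℝ => rexp (-κ / s)) (rexp (-κ / s) * (κ / s ^ 2)) s := by
    have := ((hasDerivAt_inv hs.ne').const_mul (-κ)).exp
    simp only [← div_eq_mul_inv] at this
    exact this.congr_deriv (by field_simp)
  have hP : ∀ q : ℝ, HasDerivAt (fun s : ℝ => s ^ q) (q * s ^ (q - 1)) s := fun q =>
    Real.hasDerivAt_rpow_const (Or.inl hs.ne')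
  have hsum := HasDerivAt.fun_sum (u := Finset.range (j + 1)) (fun k _ =>
    (((hP (-(μ + j + k))).mul hE).const_mul
      ((j.choose k : ℝ) * (Gamma (μ + j) / Gamma (μ + k)) * (-κ) ^ k)))
  refine hsum.congr_deriv ?_
  set X : ℕ → ℝ := fun k => (-κ) ^ k * (s ^ (-(μ + j + 1 + k)) * rexp (-κ / s)) with hX
  set c : ℕ → ℝ := fun k => (j.choose k : ℝ) * (Gamma (μ + j) / Gamma (μ + k)) with hc
  have e1 : ∀ k : ℕ, (j.choose k : ℝ) * (Gamma (μ + j) / Gamma (μ + k)) * (-κ) ^ k *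
      (-(μ + j + k) * s ^ (-(μ + j + k) - 1) * rexp (-κ / s)
        + s ^ (-(μ + j + k)) * (rexp (-κ / s) * (κ / s ^ 2)))
      = -((μ + j + k) * c k * X k + c k * X (k + 1)) := by
    intro k
    have a1 : s ^ (-(μ + j + k) - 1) = s ^ (-(μ + j + 1 + k)) := by congr 1; ring
    have a2 : s ^ (-(μ + j + k)) = s ^ (-(μ + j + 1 + (k + 1 : ℕ))) * s ^ 2 := by
      rw [← Real.rpow_natCast s 2, ← Real.rpow_add hs]; congr 1; push_cast; ring
    rw [a1, a2]
    simp only [hX, hc]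
    field_simp
    ring
  rw [Finset.sum_congr rfl (fun k _ => e1 k), Finset.sum_neg_distrib, neg_inj,
    Finset.sum_add_distrib]
  have e2 : ∑ k ∈ Finset.range (j + 1), (μ + j + k) * c k * X k
      = ∑ k ∈ Finset.range (j + 1), (μ + j + (k + 1 : ℕ)) * c (k + 1) * X (k + 1)
        + (μ + j) * c 0 * X 0 := by
    have := Finset.sum_range_succ (fun k : ℕ => (μ + j + k) * c k * X k) (j + 1)
    rw [Finset.sum_range_succ'] at this
    simp only [hc, Nat.choose_succ_self, Nat.cast_zero, zero_mul, mul_zero, add_zero] at this ⊢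
    exact this.symm
  have e3 : gForm μ κ (j + 1) s = ∑ k ∈ Finset.range (j + 1),
      (((j + 1).choose (k + 1) : ℝ) * (Gamma (μ + j + 1) / Gamma (μ + k + 1))) * X (k + 1)
        + (Gamma (μ + j + 1) / Gamma μ) * X 0 := by
    rw [gForm, Finset.sum_range_succ']
    congr 1
    · refine Finset.sum_congr rfl fun k _ => ?_
      simp only [hX]
      push_cast
      simp only [← add_assoc]
      ring
    · simp only [hX]
      push_cast
      simp [← add_assoc]
  rw [e2, e3, add_right_comm, ← Finset.sum_add_distrib]
  congr 1
  · refine Finset.sum_congr rfl fun k _ => ?_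
    rw [← gCoeff μ hμ j k]
    simp only [hc]
    push_cast
    simp only [← add_assoc]
    ring
  · rw [Real.Gamma_add_one (by positivity)]
    simp only [hc, Nat.choose_zero_right, Nat.cast_one, Nat.cast_zero, add_zero, one_mul]
    ring

theorem gauss_moment {m : ℕ} (hm : 2 ≤ m) (d : ℝ) (w : EuclideanSpace ℝ (Fin m)) (j : ℕ) :
    ∀ s : ℝ, 0 < s → ∫ u : EuclideanSpace ℝ (Fin m),
      (‖u‖ : ℂ) ^ (2 * j) * Complex.exp (-(s : ℂ) * (‖u‖ : ℂ) ^ 2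
        + (Complex.I * d) * ((inner ℝ w u : ℝ) : ℂ))
      = ((π ^ ((m : ℝ) / 2) * gForm ((m : ℝ) / 2) (d ^ 2 * ‖w‖ ^ 2 / 4) j s : ℝ) : ℂ) := by
  have hμ : 0 < (m : ℝ) / 2 := by
    have : 0 < m := by omega
    positivity
  induction j with
  | zero =>
    intro s hs
    have h := GaussianFourier.integral_cexp_neg_mul_sq_norm_add_of_euclideanSpace
      (b := (s : ℂ)) (by simpa using hs) (Complex.I * d) w
    simp only [mul_zero, pow_zero, one_mul]
    rw [h]
    have hG := (Real.Gamma_pos_of_pos hμ).ne'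
    have e0 : gForm ((m : ℝ) / 2) (d ^ 2 * ‖w‖ ^ 2 / 4) 0 s
        = s ^ (-((m : ℝ) / 2)) * rexp (-(d ^ 2 * ‖w‖ ^ 2 / 4) / s) := by
      simp [gForm, hG]
    rw [e0, Fintype.card_fin]
    have e1 : ((π : ℂ) / s) ^ ((m : ℂ) / 2) = ((π ^ ((m : ℝ) / 2) * s ^ (-((m : ℝ) / 2)) : ℝ) : ℂ) := by
      rw [Real.rpow_neg hs.le, ← div_eq_mul_inv, ← Real.div_rpow Real.pi_pos.le hs.le,
        Complex.ofReal_cpow (by positivity)]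
      push_cast; rfl
    have e2 : (Complex.I * d) ^ 2 * (‖w‖ : ℂ) ^ 2 / (4 * s)
        = ((-(d ^ 2 * ‖w‖ ^ 2 / 4) / s : ℝ) : ℂ) := by
      rw [mul_pow, Complex.I_sq]
      push_cast
      field_simp
    rw [e1, e2, ← Complex.ofReal_exp]
    push_cast
    ring
  | succ j ih =>
    intro s hs
    have h1 := gauss_deriv j s hs d w
    have h2 := ((gForm_deriv ((m : ℝ) / 2) (d ^ 2 * ‖w‖ ^ 2 / 4) hμ j s hs).const_mul
      (π ^ ((m : ℝ) / 2))).ofReal_comp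
    have h3 := h1.congr_of_eventuallyEq (f₁ := fun s : ℝ =>
      ((π ^ ((m : ℝ) / 2) * gForm ((m : ℝ) / 2) (d ^ 2 * ‖w‖ ^ 2 / 4) j s : ℝ) : ℂ)) (by
        filter_upwards [Ioi_mem_nhds hs] with z hz
        exact (ih z hz).symm)
    have h4 := h3.unique h2
    rw [neg_eq_iff_eq_neg] at h4
    rw [h4]
    push_cast; ring

theorem comb_sum (a : ℝ) (t k : ℕ) (hk : k ≤ t) :
    ∑ i ∈ Finset.range (t + 1), (t.choose i : ℝ) * (i.choose k : ℝ) * (a / 2) ^ (t - i)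
      * (-1 : ℝ) ^ i * a ^ (i - k) = (t.choose k : ℝ) * (-1 : ℝ) ^ t * (a / 2) ^ (t - k) := by
  obtain ⟨n, rfl⟩ := Nat.exists_eq_add_of_le hk
  rw [add_assoc, Finset.sum_range_add]
  have h0 : ∑ i ∈ Finset.range k, ((k + n).choose i : ℝ) * (i.choose k : ℝ) * (a / 2) ^ (k + n - i)
      * (-1 : ℝ) ^ i * a ^ (i - k) = 0 := by
    refine Finset.sum_eq_zero fun i hi => ?_
    rw [Nat.choose_eq_zero_of_lt (Finset.mem_range.mp hi)]; simp
  rw [h0, zero_add]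
  have h1 : ∀ i ∈ Finset.range (n + 1), ((k + n).choose (k + i) : ℝ) * ((k + i).choose k : ℝ)
      * (a / 2) ^ (k + n - (k + i)) * (-1 : ℝ) ^ (k + i) * a ^ (k + i - k)
      = ((k + n).choose k : ℝ) * (-1) ^ k * ((-a) ^ i * (a / 2) ^ (n - i) * (n.choose i : ℝ)) := by
    intro i _
    have h2 := Nat.choose_mul (n := k + n) (k := k + i) (s := k) (by omega)
    have h3 : ((k + n).choose (k + i) : ℝ) * ((k + i).choose k : ℝ)
        = ((k + n).choose k : ℝ) * (n.choose i : ℝ) := by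
      simp only [Nat.add_sub_cancel_left] at h2
      exact_mod_cast h2
    rw [h3, Nat.add_sub_cancel_left, Nat.add_sub_add_left, neg_pow a, pow_add]
    ring
  rw [Finset.sum_congr rfl h1, ← Finset.mul_sum, ← add_pow, Nat.add_sub_cancel_left]
  have : -a + a / 2 = -1 * (a / 2) := by ring
  rw [this, mul_pow, pow_add]
  ring

/-- coefficients of the radial polynomial -/
noncomputable def lcoef (m : ℕ) (a : ℝ) (t i : ℕ) : ℝ :=
  2 ^ (2 * t) * (2 / a) ^ (2 * t) * (t.choose i : ℝ)
      * (Real.Gamma ((m : ℝ) / 2 + t) / Real.Gamma ((m : ℝ) / 2 + i))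
      * (a / 2) ^ (t - i) * (-1 : ℝ) ^ i

theorem lagP_eq (m : ℕ) (a : ℝ) (t : ℕ) (r : ℝ) (hr : 0 ≤ r) :
    lagP16 m a t r = ∑ i ∈ Finset.range (t + 1), lcoef m a t i * (r ^ (a / 2)) ^ (2 * i) := by
  rw [lagP16]
  refine Finset.sum_congr rfl fun i _ => ?_
  rw [lcoef, ← Real.rpow_natCast (r ^ (a / 2)), ← Real.rpow_mul hr]
  congr 2
  push_cast; ring

theorem gForm_eval (μ a R : ℝ) (ha : 0 < a) (i : ℕ) :
    gForm μ (R ^ 2 / a ^ 2) i (1 / a) = a ^ μ * rexp (-R ^ 2 / a)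
      * ∑ k ∈ Finset.range (i + 1), (i.choose k : ℝ) * (Gamma (μ + i) / Gamma (μ + k))
        * (-1) ^ k * R ^ (2 * k) * a ^ (i - k) := by
  rw [gForm, Finset.mul_sum]
  refine Finset.sum_congr rfl fun k hk => ?_
  have hk : k ≤ i := Nat.lt_succ_iff.mp (Finset.mem_range.mp hk)
  have e1 : (1 / a) ^ (-(μ + i + k)) = a ^ μ * a ^ i * a ^ k := by
    rw [one_div, Real.inv_rpow ha.le, Real.rpow_neg ha.le, inv_inv, Real.rpow_add ha,
      Real.rpow_add ha, Real.rpow_natCast, Real.rpow_natCast]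
  have e2 : -(R ^ 2 / a ^ 2) / (1 / a) = -R ^ 2 / a := by field_simp
  have e3 : a ^ i = a ^ (i - k) * a ^ k := by rw [← pow_add]; congr 1; omega
  rw [e1, e2, e3, neg_pow, div_pow, pow_mul, ← pow_mul a 2 k]
  have e4 : a ^ (2 * k) = a ^ k * a ^ k := by rw [← pow_add]; congr 1; omega
  rw [e4]
  field_simp

theorem lag_sum (m : ℕ) (hm : 2 ≤ m) (a R : ℝ) (ha : 0 < a) (t : ℕ) :
    ∑ i ∈ Finset.range (t + 1), lcoef m a t i * gForm ((m : ℝ) / 2) (R ^ 2 / a ^ 2) i (1 / a)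
      = a ^ ((m : ℝ) / 2) * rexp (-R ^ 2 / a) * ((-1) ^ t *
        ∑ k ∈ Finset.range (t + 1), lcoef m a t k * R ^ (2 * k)) := by
  have hμ : 0 < (m : ℝ) / 2 := by
    have : 0 < m := by omega
    positivity
  set μ : ℝ := (m : ℝ) / 2 with hμd
  set D : ℝ := 2 ^ (2 * t) * (2 / a) ^ (2 * t) with hD
  have h1 : ∀ i ∈ Finset.range (t + 1), lcoef m a t i * gForm μ (R ^ 2 / a ^ 2) i (1 / a)
      = a ^ μ * rexp (-R ^ 2 / a) * ∑ k ∈ Finset.range (t + 1),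
        (D * (Gamma (μ + t) / Gamma (μ + k)) * (-1) ^ k * R ^ (2 * k)) *
        ((t.choose i : ℝ) * (i.choose k : ℝ) * (a / 2) ^ (t - i) * (-1 : ℝ) ^ i * a ^ (i - k)) := by
    intro i hi
    have hi : i + 1 ≤ t + 1 := Finset.mem_range.mp hi
    rw [gForm_eval μ a R ha, mul_left_comm, Finset.mul_sum]
    congr 1
    have hG : Gamma (μ + i) ≠ 0 := (Real.Gamma_pos_of_pos (by positivity)).ne'
    rw [← Finset.sum_subset (Finset.range_mono hi)]
    · refine Finset.sum_congr rfl fun k _ => ?_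
      rw [lcoef, ← hμd, ← hD]
      field_simp
    · intro k _ hk
      rw [Finset.mem_range, not_lt] at hk
      rw [Nat.choose_eq_zero_of_lt (by omega : i < k)]; simp
  rw [Finset.sum_congr rfl h1, ← Finset.mul_sum, Finset.sum_comm]
  congr 1
  rw [Finset.mul_sum]
  refine Finset.sum_congr rfl fun k hk => ?_
  rw [← Finset.mul_sum, comb_sum a t k (Nat.lt_succ_iff.mp (Finset.mem_range.mp hk)), lcoef,
    ← hμd, ← hD]
  have : (-1 : ℝ) ^ k * (-1) ^ k = 1 := by rw [← mul_pow]; simp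
  ring

theorem stmt_16 (m : ℕ) (hm : 2 ≤ m) (a b : ℝ) (ha : 0 < a)
    (t : ℕ) (y : EuclideanSpace ℝ (Fin m)) (hy : y ≠ 0) :
    (((2 * Real.pi) ^ (-((m : ℝ) / 2)) * (2 / a) ^ ((m : ℝ) / 2 - 1) : ℝ) : ℂ)
        * ∫ x : EuclideanSpace ℝ (Fin m),
            Kker m a b x y
              * ((lagP16 m a t ‖x‖ * ‖x‖ ^ (-(a * b) / 2) * Real.exp (-‖x‖ ^ a / a)
                  * ‖x‖ ^ (a * b - (1 - a / 2) * m) : ℝ) : ℂ)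
      = (((-1 : ℝ) ^ t * lagP16 m a t ‖y‖ * ‖y‖ ^ (-(a * b) / 2)
          * Real.exp (-‖y‖ ^ a / a) : ℝ) : ℂ) := by
  have hμ : 0 < (m : ℝ) / 2 := by
    have : 0 < m := by omega
    positivity
  have hny : 0 < ‖y‖ := norm_pos_iff.mpr hy
  have : Nontrivial (EuclideanSpace ℝ (Fin m)) := by
    have : Nonempty (Fin m) := ⟨⟨0, by omega⟩⟩
    infer_instance
  have key : ∀ x : EuclideanSpace ℝ (Fin m), x ≠ 0 →
      ‖‖x‖ ^ (a / 2 - 1) • x‖ = ‖x‖ ^ (a / 2) := by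
    intro x hx
    have hn : 0 < ‖x‖ := norm_pos_iff.mpr hx
    rw [norm_smul, Real.norm_of_nonneg (by positivity), Real.rpow_sub hn, Real.rpow_one]
    field_simp
  have hsq : ∀ r : ℝ, 0 ≤ r → (r ^ (a / 2)) ^ 2 = r ^ a := by
    intro r hr
    rw [← Real.rpow_natCast, ← Real.rpow_mul hr]; congr 1; push_cast; ring
  set v : EuclideanSpace ℝ (Fin m) := ‖y‖ ^ (a / 2 - 1) • y with hv
  have hvn : ‖v‖ = ‖y‖ ^ (a / 2) := key y hy
  set G : EuclideanSpace ℝ (Fin m) → ℂ := fun u => ∑ i ∈ Finset.range (t + 1),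
    (lcoef m a t i : ℂ) * ((‖u‖ : ℂ) ^ (2 * i) * Complex.exp (-((1 / a : ℝ) : ℂ) * (‖u‖ : ℂ) ^ 2
        + (Complex.I * ((-2 / a : ℝ) : ℂ)) * ((inner ℝ v u : ℝ) : ℂ))) with hG
  have hGint : ∫ u, G u = ((π ^ ((m : ℝ) / 2) * (a ^ ((m : ℝ) / 2) * rexp (-‖y‖ ^ a / a) *
      ((-1) ^ t * lagP16 m a t ‖y‖)) : ℝ) : ℂ) := by
    simp only [hG]
    rw [integral_finsetSum _ (fun i _ => (gauss_int i (1 / a) (by positivity) (-2 / a) v).const_mul _)]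
    rw [lagP_eq m a t _ hny.le, ← hsq _ hny.le, ← lag_sum m hm a _ ha t, Finset.mul_sum,
      Complex.ofReal_sum]
    refine Finset.sum_congr rfl fun i _ => ?_
    rw [integral_const_mul, gauss_moment hm (-2 / a) v i (1 / a) (by positivity), hvn]
    have : (-2 / a) ^ 2 * (‖y‖ ^ (a / 2)) ^ 2 / 4 = (‖y‖ ^ (a / 2)) ^ 2 / a ^ 2 := by
      field_simp; norm_num
    rw [this]
    push_cast
    ring
  have hpt : ∀ᵐ x : EuclideanSpace ℝ (Fin m),
      Kker m a b x y
              * ((lagP16 m a t ‖x‖ * ‖x‖ ^ (-(a * b) / 2) * Real.exp (-‖x‖ ^ a / a)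
                  * ‖x‖ ^ (a * b - (1 - a / 2) * m) : ℝ) : ℂ)
      = ((2 / a * ‖y‖ ^ (-(a * b) / 2) : ℝ) : ℂ) *
        (((a / 2 * ‖x‖ ^ ((a / 2 - 1) * m) : ℝ) : ℂ) * G (‖x‖ ^ (a / 2 - 1) • x)) := by
    have h0 : ∀ᵐ x : EuclideanSpace ℝ (Fin m), x ≠ 0 := by simp [ae_iff]
    filter_upwards [h0] with x hx
    have hn : 0 < ‖x‖ := norm_pos_iff.mpr hx
    have hGx : G (‖x‖ ^ (a / 2 - 1) • x) = ((lagP16 m a t ‖x‖ * rexp (-‖x‖ ^ a / a) : ℝ) : ℂ)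
        * Complex.exp (-(2 * Complex.I / (a : ℂ)) * ((∑ j, x j * y j : ℝ) : ℂ)
        * (((‖x‖ * ‖y‖) ^ (a / 2 - 1) : ℝ) : ℂ)) := by
      have hin : inner ℝ v (‖x‖ ^ (a / 2 - 1) • x)
          = (∑ j, x j * y j) * (‖x‖ * ‖y‖) ^ (a / 2 - 1) := by
        rw [hv, real_inner_smul_left, real_inner_smul_right, Real.mul_rpow hn.le hny.le,
          PiLp.inner_apply]
        simp only [RCLike.inner_apply, conj_trivial]
        ring
      simp only [hG]
      rw [key x hx, hin, lagP_eq m a t _ hn.le]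
      have hexp : Complex.exp (-((1 / a : ℝ) : ℂ) * ((‖x‖ ^ (a / 2) : ℝ) : ℂ) ^ 2
        + (Complex.I * ((-2 / a : ℝ) : ℂ)) *
          (((∑ j, x j * y j) * (‖x‖ * ‖y‖) ^ (a / 2 - 1) : ℝ) : ℂ))
        = ((rexp (-‖x‖ ^ a / a) : ℝ) : ℂ) *
          Complex.exp (-(2 * Complex.I / (a : ℂ)) * ((∑ j, x j * y j : ℝ) : ℂ)
        * (((‖x‖ * ‖y‖) ^ (a / 2 - 1) : ℝ) : ℂ)) := by
        rw [Complex.ofReal_exp, ← Complex.exp_add, ← Complex.ofReal_pow, hsq _ hn.le]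
        congr 1
        push_cast
        ring
      rw [hexp]
      generalize Complex.exp (-(2 * Complex.I / (a : ℂ)) * ((∑ j, x j * y j : ℝ) : ℂ)
        * (((‖x‖ * ‖y‖) ^ (a / 2 - 1) : ℝ) : ℂ)) = Z
      rw [Complex.ofReal_mul, Complex.ofReal_sum, Finset.sum_mul, Finset.sum_mul]
      refine Finset.sum_congr rfl fun i _ => ?_
      push_cast
      ring
    rw [hGx, Kker]
    have hpow : (‖x‖ * ‖y‖) ^ (-(a * b) / 2) * (‖x‖ ^ (-(a * b) / 2)
        * ‖x‖ ^ (a * b - (1 - a / 2) * m)) = ‖y‖ ^ (-(a * b) / 2) * ‖x‖ ^ ((a / 2 - 1) * m) := by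
      rw [Real.mul_rpow hn.le hny.le, mul_comm (‖x‖ ^ (-(a * b) / 2)), mul_assoc,
        ← Real.rpow_add hn, ← Real.rpow_add hn]
      congr 2; ring
    set Z := Complex.exp (-(2 * Complex.I / (a : ℂ)) * ((∑ j, x j * y j : ℝ) : ℂ)
        * (((‖x‖ * ‖y‖) ^ (a / 2 - 1) : ℝ) : ℂ))
    have e1 : ∀ A B : ℝ, (A : ℂ) * Z * (B : ℂ) = ((A * B : ℝ) : ℂ) * Z := by
      intro A B; push_cast; ring
    have e2 : ∀ A B C : ℝ, (A : ℂ) * ((B : ℂ) * ((C : ℂ) * Z)) = ((A * B * C : ℝ) : ℂ) * Z := by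
      intro A B C; push_cast; ring
    rw [e1, e2]
    congr 2
    have ha2 : 2 / a * (a / 2) = 1 := by field_simp
    linear_combination (lagP16 m a t ‖x‖ * rexp (-‖x‖ ^ a / a)) * hpow
      - (‖y‖ ^ (-(a * b) / 2) * ‖x‖ ^ ((a / 2 - 1) * m) * lagP16 m a t ‖x‖
        * rexp (-‖x‖ ^ a / a)) * ha2
  rw [integral_congr_ae hpt, integral_const_mul, radial_cov hm (a / 2) (by positivity) G, hGint,
    ← Complex.ofReal_mul, ← Complex.ofReal_mul]
  congr 1
  have hc : (2 * π) ^ (-((m : ℝ) / 2)) * (2 / a) ^ ((m : ℝ) / 2 - 1) * (2 / a)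
      * (π ^ ((m : ℝ) / 2) * a ^ ((m : ℝ) / 2)) = 1 := by
    have hpi := Real.pi_pos
    have h2a : (0 : ℝ) < 2 / a := by positivity
    rw [mul_assoc ((2 * π) ^ (-((m : ℝ) / 2))), ← Real.rpow_add_one h2a.ne', sub_add_cancel,
      Real.rpow_neg (by positivity), Real.mul_rpow (by norm_num) hpi.le,
      Real.div_rpow (by norm_num) ha.le]
    have p1 : (0 : ℝ) < 2 ^ ((m : ℝ) / 2) := by positivity
    have p2 : (0 : ℝ) < π ^ ((m : ℝ) / 2) := by positivity
    have p3 : (0 : ℝ) < a ^ ((m : ℝ) / 2) := by positivity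
    field_simp
  linear_combination ((-1) ^ t * lagP16 m a t ‖y‖ * ‖y‖ ^ (-(a * b) / 2)
          * Real.exp (-‖y‖ ^ a / a)) * hc
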